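/- If C is a self-dual ideal of 𝓡 (a self-dual cyclic code of length 2^s over R₃), then T_1(C) = 2^{s-1} and T_2(C) = 2^s − T_0(C). -/

import Mathlib

noncomputable section

open Polynomial

/-- The finite field `GF(2^m)`. -/
abbrev Fq (m : ℕ) : Type := GaloisField 2 m

/-- The ring `R₃ = F[u]/⟨u³⟩`. -/
abbrev R3 (m : ℕ) : Type := AdjoinRoot (X ^ 3 : (Fq m)[X])

/-- The polynomial `x^{2^s} + 1` over `R₃`. -/
abbrev gR (m s : ℕ) : (R3 m)[X] := X ^ (2 ^ s) + 1

/-- The polynomial `x^{2^s} + 1` over `F`. -/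
abbrev gK (m s : ℕ) : (Fq m)[X] := X ^ (2 ^ s) + 1

/-- The ring `𝓡 = R₃[x]/⟨x^{2^s}+1⟩`. -/
abbrev RR (m s : ℕ) : Type := AdjoinRoot (gR m s)

/-- The ring `𝓚 = F[x]/⟨x^{2^s}+1⟩`. -/
abbrev KK (m s : ℕ) : Type := AdjoinRoot (gK m s)

/-- The element `u` of `R₃`. -/
def uu (m : ℕ) : R3 m := AdjoinRoot.root _

/-- The element `u` of `𝓡`. -/
def uR (m s : ℕ) : RR m s := algebraMap (R3 m) (RR m s) (uu m)

/-- The element `x` of `𝓡`. -/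
def xR (m s : ℕ) : RR m s := AdjoinRoot.root _

/-- The element `x` of `𝓚`. -/
def xK (m s : ℕ) : KK m s := AdjoinRoot.root _

lemma gR_monic (m s : ℕ) : (gR m s).Monic := by
  have h : (gR m s) = X ^ (2 ^ s) + C 1 := by simp [gR]
  rw [h]; exact monic_X_pow_add_C _ (by positivity)

lemma gK_monic (m s : ℕ) : (gK m s).Monic := by
  have h : (gK m s) = X ^ (2 ^ s) + C 1 := by simp [gK]
  rw [h]; exact monic_X_pow_add_C _ (by positivity)

/-- The standard representative (of degree `< 2^s`) of an element of `𝓡`. -/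
def repR (m s : ℕ) (c : RR m s) : (R3 m)[X] := AdjoinRoot.modByMonicHom (gR_monic m s) c

/-- The standard representative (of degree `< 2^s`) of an element of `𝓚`. -/
def repK (m s : ℕ) (c : KK m s) : (Fq m)[X] := AdjoinRoot.modByMonicHom (gK_monic m s) c

/-- The `j`-th coefficient of the standard representative of `c ∈ 𝓡`. -/
def coeffR (m s : ℕ) (c : RR m s) (j : ℕ) : R3 m := (repR m s c).coeff j

/-- The dot product on `𝓡`. -/
def dotR (m s : ℕ) (c d : RR m s) : R3 m :=
  ∑ j ∈ Finset.range (2 ^ s), coeffR m s c j * coeffR m s d j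

/-- The dual of a set of codewords. -/
def dualSet (m s : ℕ) (S : Set (RR m s)) : Set (RR m s) :=
  {c | ∀ d ∈ S, dotR m s c d = 0}

/-- A cyclic code (ideal of `𝓡`) is self-dual if it coincides with its dual. -/
def IsSelfDual (m s : ℕ) (C : Ideal (RR m s)) : Prop :=
  (C : Set (RR m s)) = dualSet m s (C : Set (RR m s))

/-- The annihilator of a set of codewords. -/
def annSet (m s : ℕ) (S : Set (RR m s)) : Set (RR m s) :=
  {c | ∀ d ∈ S, c * d = 0}

/-- The reciprocal `c*(x) = x^{deg c} c(x⁻¹)` of an element of `𝓡`. -/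
def recip (m s : ℕ) (c : RR m s) : RR m s :=
  xR m s ^ (repR m s c).natDegree *
    Polynomial.aeval (Ring.inverse (xR m s)) (repR m s c)

/-- Reduction `R₃ → F` modulo `u`. -/
def epsR3 (m : ℕ) : R3 m →+* Fq m :=
  AdjoinRoot.lift (RingHom.id (Fq m)) 0 (by simp)

lemma xK_pow_add_one (m s : ℕ) : (xK m s) ^ (2 ^ s) + 1 = 0 := by
  have h := AdjoinRoot.eval₂_root (gK m s)
  simpa [gK, xK] using h

lemma xR_pow_add_one (m s : ℕ) : (xR m s) ^ (2 ^ s) + 1 = 0 := by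
  have h := AdjoinRoot.eval₂_root (gR m s)
  simpa [gR, xR] using h

/-- Reduction `μ : 𝓡 → 𝓚` modulo `u`. -/
def muRK (m s : ℕ) : RR m s →+* KK m s :=
  AdjoinRoot.lift ((algebraMap (Fq m) (KK m s)).comp (epsR3 m)) (xK m s) (by
    simp only [gR, eval₂_add, eval₂_pow, eval₂_X, eval₂_one]
    exact xK_pow_add_one m s)

/-- The natural inclusion `𝓚 → 𝓡`. -/
def KtoR (m s : ℕ) : KK m s →+* RR m s :=
  AdjoinRoot.lift ((algebraMap (R3 m) (RR m s)).comp (algebraMap (Fq m) (R3 m))) (xR m s) (by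
    simp only [gK, eval₂_add, eval₂_pow, eval₂_X, eval₂_one]
    exact xR_pow_add_one m s)

/-- The `i`-th torsion code of a set `S ⊆ 𝓡`. -/
def TorSet (m s : ℕ) (S : Set (RR m s)) (i : ℕ) : Set (KK m s) :=
  muRK m s '' {f | (uR m s) ^ i * f ∈ S}

/-- The torsion degree `T_i`: the (unique) `k` with `Tor_i = ⟨(x+1)^k⟩`. -/
def Tdeg (m s : ℕ) (S : Set (RR m s)) (i : ℕ) : ℕ :=
  sInf {k | TorSet m s S i =
    ((Ideal.span {(xK m s + 1) ^ k} : Ideal (KK m s)) : Set (KK m s))}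

/-- Substitution `h(x) ↦ h(x⁻¹)` on `𝓚`. -/
def invSub (m s : ℕ) (h : KK m s) : KK m s :=
  Polynomial.aeval (Ring.inverse (xK m s)) (repK m s h)



/-- The coefficient of `u^i`. -/
def eco (m i : ℕ) : R3 m →ₗ[Fq m] Fq m :=
  (lcoeff (Fq m) i).comp (AdjoinRoot.modByMonicHom (monic_X_pow 3))

lemma eco_mk (m i : ℕ) (hi : i < 3) (p : (Fq m)[X]) :
    eco m i (AdjoinRoot.mk _ p) = p.coeff i := by
  have h : eco m i (AdjoinRoot.mk _ p) = (p %ₘ (X ^ 3)).coeff i := rfl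
  rw [h]
  conv_rhs => rw [← modByMonic_add_div p (X ^ 3)]
  rw [coeff_add, coeff_X_pow_mul', if_neg (by omega), add_zero]

lemma eco_u_mul (m i : ℕ) (hi : i < 2) (r : R3 m) :
    eco m (i + 1) (uu m * r) = eco m i r := by
  obtain ⟨p, rfl⟩ := AdjoinRoot.mk_surjective r
  rw [uu, AdjoinRoot.root, ← map_mul, eco_mk _ _ (by omega), eco_mk _ _ (by omega), coeff_X_mul]

lemma eco_zero_eq (m : ℕ) (r : R3 m) : eco m 0 r = epsR3 m r := by
  obtain ⟨p, rfl⟩ := AdjoinRoot.mk_surjective r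
  rw [eco_mk _ _ (by omega), epsR3, AdjoinRoot.lift_mk, eval₂_id, coeff_zero_eq_eval_zero]

lemma eps_uu (m : ℕ) : epsR3 m (uu m) = 0 := by
  simp [epsR3, uu]

lemma eps_algebraMap (m : ℕ) (a : Fq m) : epsR3 m (algebraMap _ _ a) = a := by
  rw [AdjoinRoot.algebraMap_eq, epsR3, AdjoinRoot.lift_of]; rfl

lemma uu_pow (m : ℕ) : uu m ^ 3 = 0 := by
  have h := AdjoinRoot.eval₂_root (X ^ 3 : (Fq m)[X])
  simpa [uu] using h

lemma R3_decomp (m : ℕ) (r : R3 m) :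
    ∃ r', r = algebraMap (Fq m) (R3 m) (epsR3 m r) + uu m * r' := by
  rw [← eco_zero_eq]
  obtain ⟨p, rfl⟩ := AdjoinRoot.mk_surjective r
  refine ⟨AdjoinRoot.mk _ p.divX, ?_⟩
  rw [eco_mk _ _ (by omega)]
  conv_lhs => rw [← X_mul_divX_add p]
  rw [map_add, map_mul, add_comm]; rfl

lemma u_mul_eq_zero (m : ℕ) (r : R3 m) (h0 : epsR3 m r = 0) (h1 : eco m 1 r = 0) :
    uu m * r = 0 := by
  obtain ⟨r1, e1⟩ := R3_decomp m r
  rw [h0, map_zero, zero_add] at e1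
  rw [e1, eco_u_mul _ 0 (by omega), eco_zero_eq] at h1
  obtain ⟨r2, e2⟩ := R3_decomp m r1
  rw [h1, map_zero, zero_add] at e2
  rw [e1, e2]
  linear_combination r2 * uu_pow m

lemma u_sq_mul_eq_zero_iff (m : ℕ) (r : R3 m) : uu m ^ 2 * r = 0 ↔ epsR3 m r = 0 := by
  constructor
  · intro h
    have := eco_u_mul m 1 (by omega) (uu m * r)
    rw [eco_u_mul m 0 (by omega), eco_zero_eq, ← mul_assoc, ← sq, h, map_zero] at this
    exact this.symm
  · intro h
    obtain ⟨r1, e1⟩ := R3_decomp m r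
    rw [h, map_zero, zero_add] at e1
    rw [e1]
    linear_combination r1 * uu_pow m

/-! ### The ring `RR` -/

instance instNontrivR3 (m : ℕ) : Nontrivial (R3 m) := (epsR3 m).domain_nontrivial

lemma mu_mk (m s : ℕ) (p : (R3 m)[X]) :
    muRK m s (AdjoinRoot.mk _ p) = AdjoinRoot.mk _ (p.map (epsR3 m)) := by
  rw [muRK, AdjoinRoot.lift_mk, ← eval₂_map]
  exact (AdjoinRoot.aeval_eq _)

lemma mu_algebraMap (m s : ℕ) (r : R3 m) :
    muRK m s (algebraMap _ _ r) = algebraMap _ _ (epsR3 m r) := by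
  rw [AdjoinRoot.algebraMap_eq, muRK, AdjoinRoot.lift_of]; rfl

lemma mu_uR (m s : ℕ) : muRK m s (uR m s) = 0 := by
  rw [uR, mu_algebraMap, eps_uu, map_zero]

lemma mu_KtoR (m s : ℕ) (v : KK m s) : muRK m s (KtoR m s v) = v := by
  obtain ⟨p, rfl⟩ := AdjoinRoot.mk_surjective v
  have h : KtoR m s (AdjoinRoot.mk _ p) =
      AdjoinRoot.mk _ (p.map (algebraMap (Fq m) (R3 m))) := by
    rw [KtoR, AdjoinRoot.lift_mk, ← eval₂_map]
    exact (AdjoinRoot.aeval_eq _)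
  rw [h, mu_mk, map_map]
  have : (epsR3 m).comp (algebraMap (Fq m) (R3 m)) = RingHom.id _ := by
    ext a; exact eps_algebraMap m a
  rw [this, map_id]

lemma mu_surj (m s : ℕ) : Function.Surjective (muRK m s) := fun v => ⟨_, mu_KtoR m s v⟩

lemma mu_ker (m s : ℕ) (c : RR m s) (h : muRK m s c = 0) : ∃ d, c = uR m s * d := by
  have key : ∀ c : RR m s, ∃ d, c = KtoR m s (muRK m s c) + uR m s * d := by
    intro c
    induction c using AdjoinRoot.induction_on with
    | ih p =>
      induction p using Polynomial.induction_on' with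
      | add p q hp hq =>
        obtain ⟨d, hd⟩ := hp
        obtain ⟨e, he⟩ := hq
        refine ⟨d + e, ?_⟩
        rw [map_add, map_add, map_add]
        linear_combination hd + he
      | monomial n a =>
        obtain ⟨r, hr⟩ := R3_decomp m a
        have hx : KtoR m s (xK m s) = xR m s := by
          rw [KtoR, xK, AdjoinRoot.lift_root]
        have hxm : muRK m s (xR m s) = xK m s := by
          rw [muRK, xR, AdjoinRoot.lift_root]
        have hm : AdjoinRoot.mk (gR m s) (monomial n a) = algebraMap _ _ a * xR m s ^ n := by
          rw [← C_mul_X_pow_eq_monomial, map_mul, map_pow]; rfl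
        have hk : ∀ b : Fq m, KtoR m s (algebraMap _ _ b) =
            algebraMap (R3 m) (RR m s) (algebraMap _ _ b) := by
          intro b
          rw [AdjoinRoot.algebraMap_eq, KtoR, AdjoinRoot.lift_of]; rfl
        refine ⟨algebraMap _ _ r * xR m s ^ n, ?_⟩
        rw [hm, map_mul, map_pow, hxm, map_mul, map_pow, hx, mu_algebraMap, hk]
        conv_lhs => rw [hr, map_add, map_mul]
        rw [uR]; ring
  obtain ⟨d, hd⟩ := key c
  rw [h, map_zero, zero_add] at hd
  exact ⟨d, hd⟩

lemma uR_pow (m s : ℕ) : uR m s ^ 3 = 0 := by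
  rw [uR, ← map_pow, uu_pow, map_zero]

/-- The dot product, as a bilinear map. -/
def cK (m s j : ℕ) : KK m s →ₗ[Fq m] Fq m :=
  (lcoeff (Fq m) j).comp (AdjoinRoot.modByMonicHom (gK_monic m s))

def dotK (m s : ℕ) : LinearMap.BilinForm (Fq m) (KK m s) :=
  ∑ j ∈ Finset.range (2 ^ s), (LinearMap.mul (Fq m) (Fq m)).compl₁₂ (cK m s j) (cK m s j)

lemma dotK_apply (m s : ℕ) (v w : KK m s) :
    dotK m s v w = ∑ j ∈ Finset.range (2 ^ s), cK m s j v * cK m s j w := by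
  simp [dotK, LinearMap.sum_apply]

lemma cK_mu (m s j : ℕ) (c : RR m s) : cK m s j (muRK m s c) = epsR3 m (coeffR m s c j) := by
  obtain ⟨p, rfl⟩ := AdjoinRoot.mk_surjective c
  rw [mu_mk]
  have h1 : cK m s j (AdjoinRoot.mk _ (p.map (epsR3 m))) =
    ((p.map (epsR3 m)) %ₘ (gK m s)).coeff j := rfl
  have h2 : coeffR m s (AdjoinRoot.mk _ p) j = (p %ₘ gR m s).coeff j := rfl
  have h3 : gK m s = (gR m s).map (epsR3 m) := by simp [gK, gR]
  rw [h1, h2, h3, ← map_modByMonic _ (gR_monic m s), coeff_map]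

lemma eps_dotR (m s : ℕ) (c d : RR m s) :
    epsR3 m (dotR m s c d) = dotK m s (muRK m s c) (muRK m s d) := by
  rw [dotK_apply, dotR, map_sum]
  refine Finset.sum_congr rfl fun j _ => ?_
  rw [map_mul, cK_mu, cK_mu]

lemma coeffR_add (m s j : ℕ) (c d : RR m s) :
    coeffR m s (c + d) j = coeffR m s c j + coeffR m s d j := by
  simp [coeffR, repR]

lemma coeffR_smul (m s j : ℕ) (r : R3 m) (d : RR m s) :
    coeffR m s (algebraMap _ _ r * d) j = r * coeffR m s d j := by
  rw [← Algebra.smul_def]; simp [coeffR, repR]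

lemma dotR_comm (m s : ℕ) (c d : RR m s) : dotR m s c d = dotR m s d c := by
  simp [dotR, mul_comm]

lemma dotR_add (m s : ℕ) (c d e : RR m s) :
    dotR m s c (d + e) = dotR m s c d + dotR m s c e := by
  simp [dotR, coeffR_add, mul_add, Finset.sum_add_distrib]

lemma dotR_smul (m s : ℕ) (r : R3 m) (c d : RR m s) :
    dotR m s c (algebraMap _ _ r * d) = r * dotR m s c d := by
  simp only [dotR, coeffR_smul, Finset.mul_sum]
  exact Finset.sum_congr rfl fun j _ => by ring

lemma add_dotR (m s : ℕ) (c d e : RR m s) :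
    dotR m s (d + e) c = dotR m s d c + dotR m s e c := by
  rw [dotR_comm, dotR_add, dotR_comm _ _ c, dotR_comm _ _ c]

lemma smul_dotR (m s : ℕ) (r : R3 m) (c d : RR m s) :
    dotR m s (algebraMap _ _ r * d) c = r * dotR m s d c := by
  rw [dotR_comm, dotR_smul, dotR_comm]

lemma natDegree_gK (m s : ℕ) : (gK m s).natDegree = 2 ^ s := by
  have h : (gK m s) = X ^ (2 ^ s) + C 1 := by simp [gK]
  rw [h, natDegree_X_pow_add_C]

lemma dotK_symm (m s : ℕ) (v w : KK m s) : dotK m s v w = dotK m s w v := by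
  simp [dotK_apply, mul_comm]

lemma dotK_refl (m s : ℕ) : (dotK m s).IsRefl := fun v w h => by
  rw [dotK_symm]; exact h

lemma dotK_nondeg (m s : ℕ) : (dotK m s).Nondegenerate := by
  refine (LinearMap.IsRefl.nondegenerate_iff_separatingLeft (dotK_refl m s)).2 ?_
  intro v hv
  have hdeg : (gK m s).degree = (2 ^ s : ℕ) := by
    rw [degree_eq_natDegree (gK_monic m s).ne_zero, natDegree_gK]
  have hc : ∀ j < 2 ^ s, cK m s j v = 0 := by
    intro j hj
    have h := hv (AdjoinRoot.mk _ (X ^ j))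
    have h1 : ∀ i, cK m s i (AdjoinRoot.mk _ (X ^ j)) = if i = j then 1 else 0 := by
      intro i
      have : cK m s i (AdjoinRoot.mk _ (X ^ j)) = ((X ^ j) %ₘ (gK m s)).coeff i := rfl
      rw [this, (modByMonic_eq_self_iff (gK_monic m s)).2, coeff_X_pow]
      rw [hdeg, degree_X_pow]; exact_mod_cast hj
    rw [dotK_apply] at h
    simp only [h1] at h
    simpa [hj] using h
  obtain ⟨p, rfl⟩ := AdjoinRoot.mk_surjective v
  have h0 : p %ₘ gK m s = 0 := by
    ext j
    by_cases hj : j < 2 ^ s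
    · exact hc j hj
    · rw [coeff_zero]
      refine coeff_eq_zero_of_degree_lt ((degree_modByMonic_lt p (gK_monic m s)).trans_le ?_)
      rw [hdeg]; exact_mod_cast not_lt.1 hj
  rw [AdjoinRoot.mk_eq_zero]
  exact (modByMonic_eq_zero_iff_dvd (gK_monic m s)).1 h0

instance finKK (m s : ℕ) : FiniteDimensional (Fq m) (KK m s) :=
  (AdjoinRoot.powerBasis' (gK_monic m s)).finite

lemma finrank_KK (m s : ℕ) : Module.finrank (Fq m) (KK m s) = 2 ^ s := by
  rw [(AdjoinRoot.powerBasis' (gK_monic m s)).finrank, AdjoinRoot.powerBasis'_dim, natDegree_gK]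

/-! ### Ideals of `KK` -/

instance charKX (m : ℕ) : CharP (Fq m)[X] 2 := inferInstance

lemma gK_eq (m s : ℕ) : gK m s = (X + 1) ^ 2 ^ s := by
  rw [add_pow_char_pow, one_pow]

lemma X1_eq (m : ℕ) : (X + 1 : (Fq m)[X]) = X + C 1 := by simp

lemma pi_eq (m s k : ℕ) :
    (xK m s + 1) ^ k = AdjoinRoot.mk (gK m s) ((X + 1) ^ k) := by
  rw [map_pow, map_add, map_one]; rfl

lemma ideal_exists (m s : ℕ) (I : Ideal (KK m s)) :
    ∃ k ≤ 2 ^ s, I = Ideal.span {(xK m s + 1) ^ k} := by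
  obtain ⟨p, hp⟩ := (IsPrincipalIdealRing.principal (I.comap (AdjoinRoot.mk (gK m s)))).principal
  have hp' : I.comap (AdjoinRoot.mk (gK m s)) = Ideal.span {p} := hp
  have hd : p ∣ (X + 1) ^ 2 ^ s := by
    rw [← gK_eq, ← Ideal.mem_span_singleton, ← hp', Ideal.mem_comap, AdjoinRoot.mk_self]
    exact I.zero_mem
  have hpr : Prime (X + 1 : (Fq m)[X]) := by
    have := prime_X_sub_C (R := Fq m) (-1)
    simpa using this
  obtain ⟨k, hk, ha⟩ := (dvd_prime_pow hpr _).1 hd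
  refine ⟨k, hk, ?_⟩
  rw [Ideal.span_singleton_eq_span_singleton.2 ha] at hp'
  rw [← Ideal.map_comap_of_surjective _ AdjoinRoot.mk_surjective I, hp', Ideal.map_span,
    Set.image_singleton, pi_eq]

lemma finrank_span (m s k : ℕ) (hk : k ≤ 2 ^ s) :
    Module.finrank (Fq m) ((Ideal.span {(xK m s + 1) ^ k}).restrictScalars (Fq m)) =
      2 ^ s - k := by
  set I : Ideal (KK m s) := Ideal.span {(xK m s + 1) ^ k}
  have h1 := Submodule.finrank_quotient_add_finrank (I.restrictScalars (Fq m))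
  rw [finrank_KK] at h1
  have hle : Ideal.span {gK m s} ≤ Ideal.span {((X + 1) ^ k : (Fq m)[X])} := by
    rw [Ideal.span_singleton_le_span_singleton, gK_eq]
    exact pow_dvd_pow _ hk
  have hI : I = (Ideal.span {((X + 1) ^ k : (Fq m)[X])}).map
      (Ideal.Quotient.mkₐ (Fq m) (Ideal.span {gK m s})) := by
    rw [Ideal.map_span, Set.image_singleton]
    show I = _
    simp only [I, pi_eq]; rfl
  have e1 : (KK m s ⧸ I.restrictScalars (Fq m)) ≃ₗ[Fq m] (KK m s ⧸ I) :=
    Submodule.Quotient.restrictScalarsEquiv _ _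
  have e2 : (KK m s ⧸ I) ≃ₗ[Fq m] (Fq m)[X] ⧸ Ideal.span {((X + 1) ^ k : (Fq m)[X])} := by
    rw [hI]
    exact (DoubleQuot.quotQuotEquivQuotOfLEₐ (Fq m) hle).toLinearEquiv
  have h2 := (e1.trans e2).finrank_eq
  have hmon : ((X + 1) ^ k : (Fq m)[X]).Monic := by
    rw [X1_eq]; exact (monic_X_add_C 1).pow k
  rw [finrank_quotient_span_eq_natDegree' hmon, X1_eq, natDegree_pow, natDegree_X_add_C,
    mul_one] at h2
  omega

lemma Tdeg_spec (m s : ℕ) (S : Set (RR m s)) (i : ℕ) (I : Ideal (KK m s))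
    (h : TorSet m s S i = I) : Tdeg m s S i ≤ 2 ^ s ∧
      Module.finrank (Fq m) (I.restrictScalars (Fq m)) = 2 ^ s - Tdeg m s S i := by
  obtain ⟨k, hk, hI⟩ := ideal_exists m s I
  have hmem : k ∈ {k | TorSet m s S i =
    ((Ideal.span {(xK m s + 1) ^ k} : Ideal (KK m s)) : Set (KK m s))} := by
    show _ = _
    rw [h, hI]
  have hle : Tdeg m s S i ≤ 2 ^ s := (Nat.sInf_le hmem).trans hk
  have h2 : TorSet m s S i =
      ((Ideal.span {(xK m s + 1) ^ Tdeg m s S i} : Ideal (KK m s)) : Set (KK m s)) :=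
    Nat.sInf_mem ⟨k, hmem⟩
  refine ⟨hle, ?_⟩
  have h3 := SetLike.coe_injective (h.symm.trans h2)
  rw [h3]
  exact finrank_span m s _ hle

/-- The torsion ideal. -/
def torPre (m s : ℕ) (C : Ideal (RR m s)) (i : ℕ) : Ideal (RR m s) where
  carrier := {f | uR m s ^ i * f ∈ C}
  add_mem' := by
    intro a b ha hb
    show _ ∈ C
    rw [mul_add]; exact C.add_mem ha hb
  zero_mem' := by
    show _ ∈ C
    rw [mul_zero]; exact C.zero_mem
  smul_mem' := by
    intro a b hb
    show _ ∈ C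
    rw [smul_eq_mul, mul_left_comm]; exact C.mul_mem_left _ hb

def torI (m s : ℕ) (C : Ideal (RR m s)) (i : ℕ) : Ideal (KK m s) :=
  (torPre m s C i).map (muRK m s)

lemma mem_torI (m s : ℕ) (C : Ideal (RR m s)) (i : ℕ) (v : KK m s) :
    v ∈ torI m s C i ↔ ∃ f, uR m s ^ i * f ∈ C ∧ muRK m s f = v :=
  Ideal.mem_map_iff_of_surjective _ (mu_surj m s)

lemma torI_eq (m s : ℕ) (C : Ideal (RR m s)) (i : ℕ) :
    TorSet m s (C : Set (RR m s)) i = torI m s C i := by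
  ext v
  exact (mem_torI m s C i v).symm

lemma mem_iff (m s : ℕ) (C : Ideal (RR m s)) (hC : IsSelfDual m s C) (c : RR m s) :
    c ∈ C ↔ ∀ d ∈ C, dotR m s c d = 0 := by
  have : c ∈ (C : Set (RR m s)) ↔ c ∈ dualSet m s C := by rw [← hC]
  exact this

lemma tor_two (m s : ℕ) (C : Ideal (RR m s)) (hC : IsSelfDual m s C) :
    (torI m s C 2).restrictScalars (Fq m) =
      (dotK m s).orthogonal ((torI m s C 0).restrictScalars (Fq m)) := by
  have key : ∀ f, uR m s ^ 2 * f ∈ C ↔ ∀ d ∈ C, dotK m s (muRK m s d) (muRK m s f) = 0 := by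
    intro f
    rw [mem_iff m s C hC]
    refine forall₂_congr fun d _ => ?_
    rw [uR, ← map_pow, smul_dotR, u_sq_mul_eq_zero_iff, eps_dotR, dotK_symm]
  ext v
  rw [LinearMap.BilinForm.mem_orthogonal_iff, Submodule.restrictScalars_mem, mem_torI]
  constructor
  · rintro ⟨f, hf, rfl⟩ w hw
    rw [Submodule.restrictScalars_mem, mem_torI] at hw
    obtain ⟨d, hd, rfl⟩ := hw
    rw [pow_zero, one_mul] at hd
    exact (key f).1 hf d hd
  · intro h
    refine ⟨KtoR m s v, ?_, mu_KtoR m s v⟩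
    rw [key, mu_KtoR]
    intro d hd
    refine h _ ?_
    rw [Submodule.restrictScalars_mem, mem_torI]
    exact ⟨d, by rwa [pow_zero, one_mul], rfl⟩

lemma tor_one (m s : ℕ) (C : Ideal (RR m s)) (hC : IsSelfDual m s C) :
    (torI m s C 1).restrictScalars (Fq m) =
      (dotK m s).orthogonal ((torI m s C 1).restrictScalars (Fq m)) := by
  ext v
  rw [LinearMap.BilinForm.mem_orthogonal_iff, Submodule.restrictScalars_mem]
  constructor
  · intro hv w hw
    rw [Submodule.restrictScalars_mem] at hw
    rw [mem_torI] at hv hw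
    obtain ⟨f, hf, rfl⟩ := hv
    obtain ⟨g, hg, rfl⟩ := hw
    rw [pow_one] at hf hg
    have h := (mem_iff m s C hC _).1 hg _ hf
    rw [uR, smul_dotR, dotR_smul, ← mul_assoc, ← sq, u_sq_mul_eq_zero_iff, eps_dotR] at h
    exact h
  · intro h
    have h' : ∀ d, uR m s * d ∈ C → dotK m s v (muRK m s d) = 0 := by
      intro d hd
      rw [dotK_symm]
      refine h _ ?_
      rw [Submodule.restrictScalars_mem, mem_torI]
      exact ⟨d, by rwa [pow_one], rfl⟩
    set f0 := KtoR m s v with hf0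
    have hsm : ∀ (a : Fq m) (c : RR m s), a • c = algebraMap (R3 m) _ (algebraMap _ _ a) * c := by
      intro a c
      rw [Algebra.smul_def]; rfl
    let CF : Submodule (Fq m) (RR m s) := C.restrictScalars (Fq m)
    let muL : CF →ₗ[Fq m] KK m s :=
      { toFun := fun c => muRK m s c.1
        map_add' := fun a b => by rw [Submodule.coe_add, map_add]
        map_smul' := fun a b => by
          rw [Submodule.coe_smul, hsm, map_mul, mu_algebraMap, eps_algebraMap,
            RingHom.id_apply, Algebra.smul_def] }
    let phi : CF →ₗ[Fq m] Fq m :=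
      { toFun := fun c => eco m 1 (dotR m s f0 c.1)
        map_add' := fun a b => by rw [Submodule.coe_add, dotR_add, map_add]
        map_smul' := fun a b => by
          rw [Submodule.coe_smul, hsm, dotR_smul, ← Algebra.smul_def, map_smul,
            RingHom.id_apply] }
    have hphi : phi ∈ (LinearMap.ker muL).dualAnnihilator := by
      rw [Submodule.mem_dualAnnihilator]
      rintro ⟨c, hc⟩ hk
      have hk' : muRK m s c = 0 := hk
      obtain ⟨d, rfl⟩ := mu_ker m s c hk'
      show eco m 1 (dotR m s f0 (uR m s * d)) = 0
      rw [uR, dotR_smul, eco_u_mul m 0 (by omega), eco_zero_eq, eps_dotR, hf0, mu_KtoR]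
      exact h' d hc
    rw [← LinearMap.range_dualMap_eq_dualAnnihilator_ker] at hphi
    obtain ⟨psi, hpsi⟩ := hphi
    set w := ((dotK m s).toDual (dotK_nondeg m s)).symm psi
    have hw : ∀ z, dotK m s w z = psi z :=
      fun z => LinearMap.BilinForm.apply_toDual_symm_apply psi z
    rw [mem_torI]
    refine ⟨f0 + uR m s * KtoR m s (-w), ?_, ?_⟩
    · rw [pow_one, mem_iff m s C hC]
      intro c hc
      have hu : muRK m s (f0) = v := mu_KtoR m s v
      rw [uR, smul_dotR]
      apply u_mul_eq_zero
      · rw [eps_dotR, map_add, map_mul, ← uR, mu_uR, zero_mul, add_zero, hu]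
        exact h' c (C.mul_mem_left _ hc)
      · rw [add_dotR, smul_dotR, map_add, eco_u_mul m 0 (by omega), eco_zero_eq, eps_dotR,
          mu_KtoR, map_neg, LinearMap.neg_apply, hw]
        have := LinearMap.congr_fun hpsi ⟨c, hc⟩
        have h2 : psi (muRK m s c) = eco m 1 (dotR m s f0 c) := this
        rw [h2, add_neg_cancel]
    · rw [map_add, map_mul, mu_uR, zero_mul, add_zero]
      exact mu_KtoR m s v

/-- If `C` is a self-dual ideal of `𝓡`, then `T₁(C) = 2^{s-1}` and
`T₂(C) = 2^s − T₀(C)`. -/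
theorem stmt2 (m s : ℕ) (hm : 0 < m) (hs : 0 < s) (C : Ideal (RR m s))
    (hC : IsSelfDual m s C) :
    Tdeg m s (C : Set (RR m s)) 1 = 2 ^ (s - 1) ∧
    Tdeg m s (C : Set (RR m s)) 2 = 2 ^ s - Tdeg m s (C : Set (RR m s)) 0 := by
  have hp : 2 ^ s = 2 * 2 ^ (s - 1) := by
    rw [← pow_succ', Nat.sub_add_cancel hs]
  obtain ⟨l0, f0⟩ := Tdeg_spec m s C 0 _ (torI_eq m s C 0)
  obtain ⟨l1, f1⟩ := Tdeg_spec m s C 1 _ (torI_eq m s C 1)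
  obtain ⟨l2, f2⟩ := Tdeg_spec m s C 2 _ (torI_eq m s C 2)
  have g1 := LinearMap.BilinForm.finrank_orthogonal (dotK_nondeg m s)
    ((torI m s C 1).restrictScalars (Fq m))
  have g2 := LinearMap.BilinForm.finrank_orthogonal (dotK_nondeg m s)
    ((torI m s C 0).restrictScalars (Fq m))
  rw [← tor_one m s C hC, f1, finrank_KK] at g1
  rw [← tor_two m s C hC, f2, f0, finrank_KK] at g2
  omega
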